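/- Let T_{L,L+1} be the transfer matrices defined recursively as in the transfer-matrix Ansatz (with α ≠ 0), let v_1 = (α+β, α), and define v_{L+1} = T_{L,L+1} v_L for L ≥ 1. Then for every L ≥ 1, the sum of the entries of v_L equals Z_L = 2^{binomial(L-1,2)} (1+2α)^{L-1} (1+β)^{L-1} (2α+β). -/

import Mathlib

open scoped BigOperators Classical

/-- Bitvectors of length `L`, with entries in `ZMod 2`. -/
abbrev BV (L : ℕ) := Fin L → ZMod 2

/-- `phi j` flips component `j` of a bitvector. -/
def phi {L : ℕ} (j : Fin L) (b : BV L) : BV L :=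
  fun i => b i + if i = j then 1 else 0

/-- `psi j` flips components `j` and `j+1` of a bitvector (only `j` if `j` is the last index). -/
def psi {L : ℕ} (j : Fin L) (b : BV L) : BV L :=
  fun i => b i + if i = j ∨ (i : ℕ) = (j : ℕ) + 1 then 1 else 0

/-- The transition matrix of the asymmetric annihilation process on `L+1` sites
(entry `(c,b)` is the rate of the transition from `b` to `c`). -/
noncomputable def Mmat (L : ℕ) (α β : ℝ) : Matrix (BV (L+1)) (BV (L+1)) ℝ :=
  Matrix.of fun c b =>
    if c = b then
      -(α + ((Finset.univ.filter fun j : Fin (L+1) => (j : ℕ) + 1 < L + 1 ∧ b j = 1).card : ℝ)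
        + β * if b (Fin.last L) = 1 then 1 else 0)
    else
      (if c = phi 0 b then α else 0)
      + (if ∃ j : Fin (L+1), (j : ℕ) + 1 < L + 1 ∧ b j = 1 ∧ c = psi j b then 1 else 0)
      + (if b (Fin.last L) = 1 ∧ c = phi (Fin.last L) b then β else 0)

/-- Splitting a bitvector of length `L+1` according to its first (most significant) bit:
bitvectors starting with `0` come first in the binary-value order. -/
def splitEquiv (L : ℕ) : BV (L+1) ≃ (BV L ⊕ BV L) where
  toFun b := if b 0 = 0 then Sum.inl (Fin.tail b) else Sum.inr (Fin.tail b)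
  invFun s := Sum.elim (Fin.cons 0) (Fin.cons 1) s
  left_inv b := by
    by_cases h : b 0 = 0
    · simp only [if_pos h, Sum.elim_inl]
      conv_rhs => rw [← Fin.cons_self_tail b]
      rw [h]
    · have h1 : b 0 = 1 := by
        have : ∀ x : ZMod 2, x = 0 ∨ x = 1 := by decide
        rcases this (b 0) with h0 | h0
        · exact absurd h0 h
        · exact h0
      simp only [if_neg h, Sum.elim_inr]
      conv_rhs => rw [← Fin.cons_self_tail b]
      rw [h1]
  right_inv s := by
    rcases s with b | b
    · simp [Fin.cons_zero, Fin.tail_cons]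
    · simp [Fin.cons_zero, Fin.tail_cons, (by decide : ¬ (1 : ZMod 2) = 0)]

/-- The Kronecker product `σ ⊗ 1` where `σ = [[0,1],[1,0]]` and `1` is the identity
of size `2^L`: it flips the first (most significant) bit. -/
def SK (L : ℕ) : Matrix (BV (L+1)) (BV (L+1)) ℝ :=
  Matrix.of fun b c => if b = phi 0 c then 1 else 0

mutual
/-- The upper block `T_1^{(L)}` (here `L = n+1`) of the transfer matrix. -/
noncomputable def Tone (α β : ℝ) : (n : ℕ) → Matrix (BV (n+1)) (BV (n+1)) ℝ
  | 0 => Matrix.of fun b c =>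
      if b 0 = 0 then (if c 0 = 0 then 1 + β + α*β else α + β + α*β)
      else (if c 0 = 0 then α else 1)
  | n+1 =>
      (Matrix.reindex (splitEquiv (n+1)).symm (splitEquiv (n+1)).symm)
        (Matrix.fromBlocks
          (Tone α β n + α⁻¹ • Ttwo α β n)
          ((2:ℝ) • Ttwo α β n + α⁻¹ • Ttwo α β n)
          (SK n * Ttwo α β n)
          (α⁻¹ • Ttwo α β n))

/-- The lower block `T_2^{(L)}` (here `L = n+1`) of the transfer matrix. -/
noncomputable def Ttwo (α β : ℝ) : (n : ℕ) → Matrix (BV (n+1)) (BV (n+1)) ℝ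
  | 0 => Matrix.of fun b c =>
      if b 0 = 0 then (if c 0 = 0 then α + α*β else α*β)
      else (if c 0 = 0 then 0 else α)
  | n+1 =>
      (Matrix.reindex (splitEquiv (n+1)).symm (splitEquiv (n+1)).symm)
        (Matrix.fromBlocks
          ((2:ℝ) • Ttwo α β n)
          (Ttwo α β n * SK n)
          0
          (Ttwo α β n))
end

/-- The rectangular transfer matrix `T_{L,L+1}` (here `L = n+1`), of size `2^{L+1} × 2^L`,
obtained by stacking `T_1^{(L)}` on top of `T_2^{(L)}`. -/
noncomputable def Tmat (α β : ℝ) (n : ℕ) : Matrix (BV (n+2)) (BV (n+1)) ℝ :=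
  Matrix.of fun r c =>
    Sum.elim (fun b => Tone α β n b c) (fun b => Ttwo α β n b c) (splitEquiv (n+1) r)

/-- The recursively defined steady-state vectors: `v_1 = (α+β, α)` and
`v_{L+1} = T_{L,L+1} v_L` (here `v α β n` is `v_{n+1}`). -/
noncomputable def vvec (α β : ℝ) : (n : ℕ) → (BV (n+1) → ℝ)
  | 0 => fun b => if b 0 = 0 then α + β else α
  | n+1 => (Tmat α β n).mulVec (vvec α β n)

/-!
All columns of `T_1^{(L)}` have the same sum, and likewise for `T_2^{(L)}`, since the block
recursions preserve this property: stacking blocks adds column sums, multiplying by `σ ⊗ 1` does not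
change them, and the left and right block columns give equal totals. Hence `T_{L,L+1}` has constant
column sum `2^{L-1} (1 + 2α) (1 + β)`, which is `Z_{L+1} / Z_L`; the exponent `binomial(L-1, 2)`
collects the powers of two.
-/

/-- Every column of `A` sums to `k`, i.e. the all-ones row vector satisfies `1 ᵥ* A = k • 1`.
`A` may be rectangular. -/
def HasColSum {m n R : Type*} [Fintype m] [AddCommMonoid R] (A : Matrix m n R) (k : R) : Prop :=
  ∀ j, ∑ i, A i j = k

namespace HasColSum

section AddCommMonoid

variable {m n p q R : Type*} [Fintype m] [AddCommMonoid R]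

lemma zero : HasColSum (0 : Matrix m n R) 0 :=
  fun _ => Finset.sum_const_zero

lemma add {A B : Matrix m n R} {a b : R} (hA : HasColSum A a) (hB : HasColSum B b) :
    HasColSum (A + B) (a + b) := fun j => by
  simp only [Matrix.add_apply, Finset.sum_add_distrib, hA j, hB j]

lemma smul {S : Type*} [DistribSMul S R] {A : Matrix m n R} {a : R} (hA : HasColSum A a) (s : S) :
    HasColSum (s • A) (s • a) := fun j => by
  simp only [Matrix.smul_apply, ← Finset.smul_sum, hA j]

lemma reindex [Fintype p] {A : Matrix m n R} {a : R} (hA : HasColSum A a) (e : m ≃ p)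
    (f : n ≃ q) : HasColSum (Matrix.reindex e f A) a :=
  fun j => (Equiv.sum_comp e.symm fun i => A i (f.symm j)).trans (hA _)

lemma fromRows [Fintype p] {A : Matrix m n R} {B : Matrix p n R} {a b : R}
    (hA : HasColSum A a) (hB : HasColSum B b) : HasColSum (Matrix.fromRows A B) (a + b) :=
  fun j => by
    simp only [Fintype.sum_sum_type, Matrix.fromRows_apply_inl, Matrix.fromRows_apply_inr,
      hA j, hB j]

lemma fromCols {A : Matrix m n R} {B : Matrix m p R} {k : R}
    (hA : HasColSum A k) (hB : HasColSum B k) : HasColSum (Matrix.fromCols A B) k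
  | .inl j => hA j
  | .inr j => hB j

lemma fromBlocks [Fintype p] {A : Matrix m n R} {B : Matrix m q R} {C : Matrix p n R}
    {D : Matrix p q R} {a b c d k : R} (hA : HasColSum A a) (hB : HasColSum B b)
    (hC : HasColSum C c) (hD : HasColSum D d) (hac : a + c = k) (hbd : b + d = k) :
    HasColSum (Matrix.fromBlocks A B C D) k := by
  rw [← Matrix.fromCols_fromRows_eq_fromBlocks]
  exact (hac ▸ hA.fromRows hC).fromCols (hbd ▸ hB.fromRows hD)

end AddCommMonoid

section Semiring

variable {m n p R : Type*} [Fintype m] [Fintype n] [NonUnitalNonAssocSemiring R]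

lemma sum_mulVec {A : Matrix m n R} {a : R} (hA : HasColSum A a) (v : n → R) :
    ∑ i, A.mulVec v i = a * ∑ j, v j :=
  calc ∑ i, A.mulVec v i = ∑ j, ∑ i, A i j * v j := Finset.sum_comm
    _ = a * ∑ j, v j := by simp only [← Finset.sum_mul, hA _, Finset.mul_sum]

lemma mul {A : Matrix m n R} {B : Matrix n p R} {a b : R} (hA : HasColSum A a)
    (hB : HasColSum B b) : HasColSum (A * B) (a * b) :=
  fun j => (hA.sum_mulVec fun i => B i j).trans (by rw [hB j])

end Semiring

end HasColSum

lemma sum_bv_one {M : Type*} [AddCommMonoid M] (f : BV 1 → M) : ∑ b, f b = f 0 + f 1 := by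
  rw [← Equiv.sum_comp (Equiv.funUnique (Fin 1) (ZMod 2)).symm]
  exact Fin.sum_univ_two _

lemma hasColSum_SK (n : ℕ) : HasColSum (SK n) 1 := fun c => by
  simp [SK]

lemma hasColSum_Ttwo (α β : ℝ) (n : ℕ) : HasColSum (Ttwo α β n) (2 ^ n * (α * (1 + β))) := by
  induction n with
  | zero =>
    intro c
    rw [sum_bv_one]
    simp only [Ttwo, Matrix.of_apply, Pi.zero_apply, Pi.one_apply, one_ne_zero, if_true, if_false]
    split_ifs <;> ring
  | succ n ih =>
    rw [Ttwo]
    refine .reindex (.fromBlocks (ih.smul 2) (ih.mul (hasColSum_SK n)) .zero ih ?_ ?_) _ _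
    · rw [smul_eq_mul]
      ring
    · ring

lemma hasColSum_Tone (α β : ℝ) (hα : α ≠ 0) (n : ℕ) :
    HasColSum (Tone α β n) (2 ^ n * ((1 + α) * (1 + β))) := by
  induction n with
  | zero =>
    intro c
    rw [sum_bv_one]
    simp only [Tone, Matrix.of_apply, Pi.zero_apply, Pi.one_apply, one_ne_zero, if_true, if_false]
    split_ifs <;> ring
  | succ n ih =>
    have hT := hasColSum_Ttwo α β n
    have hTα := hT.smul α⁻¹
    rw [Tone]
    refine .reindex (.fromBlocks (ih.add hTα) ((hT.smul 2).add hTα)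
      ((hasColSum_SK n).mul hT) hTα ?_ ?_) _ _
    all_goals
      simp only [smul_eq_mul]
      field_simp
      ring

lemma Tmat_eq_reindex_fromRows (α β : ℝ) (n : ℕ) :
    Tmat α β n = Matrix.reindex (splitEquiv (n + 1)).symm (Equiv.refl _)
      (Matrix.fromRows (Tone α β n) (Ttwo α β n)) := by
  ext r c
  simp only [Tmat, Matrix.fromRows, Matrix.reindex_apply, Matrix.submatrix_apply,
    Matrix.of_apply, Equiv.symm_symm, Equiv.refl_symm, Equiv.refl_apply]
  cases splitEquiv (n + 1) r <;> rfl

lemma hasColSum_Tmat (α β : ℝ) (hα : α ≠ 0) (n : ℕ) :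
    HasColSum (Tmat α β n) (2 ^ n * ((1 + 2 * α) * (1 + β))) := by
  have hsum : 2 ^ n * ((1 + 2 * α) * (1 + β)) =
      2 ^ n * ((1 + α) * (1 + β)) + 2 ^ n * (α * (1 + β)) := by ring
  rw [Tmat_eq_reindex_fromRows, hsum]
  exact ((hasColSum_Tone α β hα n).fromRows (hasColSum_Ttwo α β n)).reindex _ _

lemma sum_vvec_zero (α β : ℝ) : ∑ b, vvec α β 0 b = 2 * α + β := by
  rw [sum_bv_one]
  simp only [vvec, Pi.zero_apply, Pi.one_apply, one_ne_zero, if_true, if_false]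
  ring

lemma sum_vvec_succ (α β : ℝ) (hα : α ≠ 0) (n : ℕ) :
    ∑ b, vvec α β (n + 1) b = 2 ^ n * ((1 + 2 * α) * (1 + β)) * ∑ b, vvec α β n b :=
  (hasColSum_Tmat α β hα n).sum_mulVec _

/-- For every `L ≥ 1` (here `L = n+1`), the sum of the entries of `v_L`
equals the partition function `Z_L = 2^C(L-1,2) (1+2α)^{L-1} (1+β)^{L-1} (2α+β)`. -/
theorem statement2 (α β : ℝ) (hα : α ≠ 0) (n : ℕ) :
    ∑ b : BV (n+1), vvec α β n b =
      2 ^ (Nat.choose n 2) * (1 + 2*α) ^ n * (1 + β) ^ n * (2*α + β) := by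
  induction n with
  | zero => simp [sum_vvec_zero]
  | succ n ih =>
    rw [sum_vvec_succ α β hα, ih, Nat.choose_succ_succ' n 1, Nat.choose_one_right, pow_add]
    ring
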